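/- arXiv:cs/0607099 — 9 statements merged into one kernel-verified Lean document; each statement's English description precedes it below -/
import Mathlib

section
/- Let M1, M2, N1, N2 be positive integers. Then the value V := min{ M1+M2, N1+N2, (max(M1,N1)+max(M1,N2)+M2)/2, (max(M2,N1)+max(M2,N2)+M1)/2, (max(M1,N1)+max(M2,N1)+N2)/2, (max(M1,N2)+max(M2,N2)+N1)/2, (max(M1,N1)+max(M1,N2)+max(M2,N1)+max(M2,N2))/3 } is the greatest element of the set { d11+d12+d21+d22 : (d11,d12,d21,d22) ∈ D_out(M1,M2,N1,N2) }; that is, some point of D_out(M1,M2,N1,N2) has coordinate sum V, and every point of D_out(M1,M2,N1,N2) has coordinate sum at most V. -/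
/-- The outer-bound region on the degrees of freedom of the MIMO X channel, as a
predicate on quadruples of (nonnegative) reals. -/
def Dout (M1 M2 N1 N2 d11 d12 d21 d22 : ℝ) : Prop :=
  0 ≤ d11 ∧ 0 ≤ d12 ∧ 0 ≤ d21 ∧ 0 ≤ d22 ∧
  d11 + d12 + d21 ≤ max N1 M1 ∧
  d11 + d12 + d22 ≤ max N1 M2 ∧
  d11 + d21 + d22 ≤ max N2 M1 ∧
  d12 + d21 + d22 ≤ max N2 M2 ∧
  d11 + d12 ≤ N1 ∧
  d21 + d22 ≤ N2 ∧
  d11 + d21 ≤ M1 ∧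
  d12 + d22 ≤ M2

theorem transport_aux (r1 r2 c1 c2 t : ℝ) (hr1 : 0 ≤ r1) (hr2 : 0 ≤ r2) (hc1 : 0 ≤ c1)
    (hc2 : 0 ≤ c2) (ht : 0 ≤ t) (h1 : t ≤ r1 + r2) (h2 : t ≤ c1 + c2) :
    ∃ x11 x12 x21 x22 : ℝ, 0 ≤ x11 ∧ 0 ≤ x12 ∧ 0 ≤ x21 ∧ 0 ≤ x22 ∧ x11 + x12 ≤ r1 ∧
      x21 + x22 ≤ r2 ∧ x11 + x21 ≤ c1 ∧ x12 + x22 ≤ c2 ∧ x11 + x12 + x21 + x22 = t := by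
  obtain ⟨a, ha0, ha1, ha2, ha3⟩ : ∃ a, 0 ≤ a ∧ a ≤ r1 ∧ a ≤ t ∧ t - a ≤ r2 := by
    rcases le_total r1 t with h | h
    · exact ⟨r1, by linarith, by linarith, by linarith, by linarith⟩
    · exact ⟨t, by linarith, by linarith, by linarith, by linarith⟩
  obtain ⟨b, hb0, hb1, hb2, hb3⟩ : ∃ b, 0 ≤ b ∧ b ≤ c1 ∧ b ≤ t ∧ t - b ≤ c2 := by
    rcases le_total c1 t with h | h
    · exact ⟨c1, by linarith, by linarith, by linarith, by linarith⟩
    · exact ⟨t, by linarith, by linarith, by linarith, by linarith⟩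
  rcases le_total a b with h | h
  · exact ⟨a, 0, b - a, t - b, by linarith, by linarith, by linarith, by linarith, by linarith,
      by linarith, by linarith, by linarith, by linarith⟩
  · exact ⟨b, a - b, 0, t - a, by linarith, by linarith, by linarith, by linarith, by linarith,
      by linarith, by linarith, by linarith, by linarith⟩

theorem achieve_aux (M1 M2 N1 N2 P11 P12 P21 P22 s : ℝ) (hM1 : 0 ≤ M1) (hM2 : 0 ≤ M2)
    (hN1 : 0 ≤ N1) (hN2 : 0 ≤ N2) (hs : 0 ≤ s)
    (a1 : M1 ≤ P11) (a2 : N1 ≤ P11) (a3 : M1 ≤ P12) (a4 : N2 ≤ P12)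
    (a5 : M2 ≤ P21) (a6 : N1 ≤ P21) (a7 : M2 ≤ P22) (a8 : N2 ≤ P22)
    (b1 : s ≤ M1 + M2) (b2 : s ≤ N1 + N2) (b3 : s ≤ (P11 + P12 + M2) / 2)
    (b4 : s ≤ (P21 + P22 + M1) / 2) (b5 : s ≤ (P11 + P21 + N2) / 2)
    (b6 : s ≤ (P12 + P22 + N1) / 2) (b7 : s ≤ (P11 + P12 + P21 + P22) / 3) :
    ∃ d11 d12 d21 d22 : ℝ, 0 ≤ d11 ∧ 0 ≤ d12 ∧ 0 ≤ d21 ∧ 0 ≤ d22 ∧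
      d11 + d12 + d21 ≤ P11 ∧ d11 + d12 + d22 ≤ P21 ∧ d11 + d21 + d22 ≤ P12 ∧
      d12 + d21 + d22 ≤ P22 ∧ d11 + d12 ≤ N1 ∧ d21 + d22 ≤ N2 ∧ d11 + d21 ≤ M1 ∧
      d12 + d22 ≤ M2 ∧ s = d11 + d12 + d21 + d22 := by
  obtain ⟨l11, p1, p2, p3⟩ : ∃ l, 0 ≤ l ∧ s - P22 ≤ l ∧ (l = 0 ∨ l = s - P22) :=
    ⟨max 0 (s - P22), le_max_left _ _, le_max_right _ _, max_choice _ _⟩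
  obtain ⟨l12, q1, q2, q3⟩ : ∃ l, 0 ≤ l ∧ s - P12 ≤ l ∧ (l = 0 ∨ l = s - P12) :=
    ⟨max 0 (s - P12), le_max_left _ _, le_max_right _ _, max_choice _ _⟩
  obtain ⟨l21, u1, u2, u3⟩ : ∃ l, 0 ≤ l ∧ s - P21 ≤ l ∧ (l = 0 ∨ l = s - P21) :=
    ⟨max 0 (s - P21), le_max_left _ _, le_max_right _ _, max_choice _ _⟩
  obtain ⟨l22, v1, v2, v3⟩ : ∃ l, 0 ≤ l ∧ s - P11 ≤ l ∧ (l = 0 ∨ l = s - P11) :=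
    ⟨max 0 (s - P11), le_max_left _ _, le_max_right _ _, max_choice _ _⟩
  have e1 : l11 + l12 ≤ N1 := by
    rcases p3 with h | h <;> rcases q3 with h' | h' <;> linarith
  have e2 : l21 + l22 ≤ N2 := by
    rcases u3 with h | h <;> rcases v3 with h' | h' <;> linarith
  have e3 : l11 + l21 ≤ M1 := by
    rcases p3 with h | h <;> rcases u3 with h' | h' <;> linarith
  have e4 : l12 + l22 ≤ M2 := by
    rcases q3 with h | h <;> rcases v3 with h' | h' <;> linarith
  have e5 : l11 + l12 + l21 + l22 ≤ s := by
    rcases p3 with h | h <;> rcases q3 with h' | h' <;> rcases u3 with k | k <;>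
      rcases v3 with k' | k' <;> linarith
  obtain ⟨x11, x12, x21, x22, y1, y2, y3, y4, z1, z2, z3, z4, z5⟩ :=
    transport_aux (N1 - (l11 + l12)) (N2 - (l21 + l22)) (M1 - (l11 + l21)) (M2 - (l12 + l22))
      (s - (l11 + l12 + l21 + l22)) (by linarith) (by linarith) (by linarith) (by linarith)
      (by linarith) (by linarith) (by linarith)
  exact ⟨l11 + x11, l12 + x12, l21 + x21, l22 + x22, by linarith, by linarith, by linarith,
    by linarith, by linarith, by linarith, by linarith, by linarith, by linarith, by linarith,
    by linarith, by linarith, by linarith⟩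

theorem stmt_0 (M1 M2 N1 N2 : ℕ) (hM1 : 0 < M1) (hM2 : 0 < M2)
    (hN1 : 0 < N1) (hN2 : 0 < N2) :
    IsGreatest
      {s : ℝ | ∃ d11 d12 d21 d22 : ℝ,
        Dout (M1 : ℝ) (M2 : ℝ) (N1 : ℝ) (N2 : ℝ) d11 d12 d21 d22 ∧
        s = d11 + d12 + d21 + d22}
      (min ((M1 : ℝ) + M2)
        (min ((N1 : ℝ) + N2)
          (min ((max (M1 : ℝ) N1 + max (M1 : ℝ) N2 + M2) / 2)
            (min ((max (M2 : ℝ) N1 + max (M2 : ℝ) N2 + M1) / 2)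
              (min ((max (M1 : ℝ) N1 + max (M2 : ℝ) N1 + N2) / 2)
                (min ((max (M1 : ℝ) N2 + max (M2 : ℝ) N2 + N1) / 2)
                  ((max (M1 : ℝ) N1 + max (M1 : ℝ) N2 + max (M2 : ℝ) N1 +
                      max (M2 : ℝ) N2) / 3))))))) := by
  have hM1' : (0 : ℝ) ≤ M1 := Nat.cast_nonneg _
  have hM2' : (0 : ℝ) ≤ M2 := Nat.cast_nonneg _
  have hN1' : (0 : ℝ) ≤ N1 := Nat.cast_nonneg _
  have hN2' : (0 : ℝ) ≤ N2 := Nat.cast_nonneg _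
  constructor
  · simp only [Set.mem_setOf_eq, Dout, max_comm (N1 : ℝ), max_comm (N2 : ℝ)]
    have a1 := le_max_left (M1 : ℝ) N1
    have a2 := le_max_right (M1 : ℝ) N1
    have a3 := le_max_left (M1 : ℝ) N2
    have a4 := le_max_right (M1 : ℝ) N2
    have a5 := le_max_left (M2 : ℝ) N1
    have a6 := le_max_right (M2 : ℝ) N1
    have a7 := le_max_left (M2 : ℝ) N2
    have a8 := le_max_right (M2 : ℝ) N2
    generalize max (M1 : ℝ) N1 = P11 at *
    generalize max (M1 : ℝ) N2 = P12 at *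
    generalize max (M2 : ℝ) N1 = P21 at *
    generalize max (M2 : ℝ) N2 = P22 at *
    generalize hV : min ((M1 : ℝ) + M2) _ = s
    have hs : 0 ≤ s := by
      rw [← hV]
      simp only [le_min_iff]
      refine ⟨?_, ?_, ?_, ?_, ?_, ?_, ?_⟩ <;> linarith
    have hle := hV.ge
    simp only [le_min_iff] at hle
    obtain ⟨b1, b2, b3, b4, b5, b6, b7⟩ := hle
    obtain ⟨d11, d12, d21, d22, c1, c2, c3, c4, c5, c6, c7, c8, c9, c10, c11, c12, c13⟩ :=
      achieve_aux M1 M2 N1 N2 P11 P12 P21 P22 s hM1' hM2' hN1' hN2' hs a1 a2 a3 a4 a5 a6 a7 a8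
        b1 b2 b3 b4 b5 b6 b7
    exact ⟨d11, d12, d21, d22, ⟨c1, c2, c3, c4, c5, c6, c7, c8, c9, c10, c11, c12⟩, c13⟩
  · rintro s ⟨d11, d12, d21, d22, h, rfl⟩
    simp only [Dout, max_comm (N1 : ℝ), max_comm (N2 : ℝ)] at h
    obtain ⟨c1, c2, c3, c4, c5, c6, c7, c8, c9, c10, c11, c12⟩ := h
    simp only [le_min_iff]
    refine ⟨?_, ?_, ?_, ?_, ?_, ?_, ?_⟩ <;> linarith
end

section
/- For all natural numbers M1, M2, N1, N2, the maximum of the six quantities min(M1+M2, N1), min(M1+M2, N2), min(M1, N1+N2), min(M2, N1+N2), min(M1+M2, N1+N2, max(M1,N2), max(M2,N1)), and min(M1+M2, N1+N2, max(M1,N1), max(M2,N2)) equals min(M1+M2, N1+N2, max(M1, M2, N1, N2)). -/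
theorem stmt_2 (M1 M2 N1 N2 : ℕ) :
    max (min (M1 + M2) N1)
      (max (min (M1 + M2) N2)
        (max (min M1 (N1 + N2))
          (max (min M2 (N1 + N2))
            (max (min (M1 + M2) (min (N1 + N2) (min (max M1 N2) (max M2 N1))))
              (min (M1 + M2) (min (N1 + N2) (min (max M1 N1) (max M2 N2)))))))) =
    min (M1 + M2) (min (N1 + N2) (max M1 (max M2 (max N1 N2)))) := by
  apply le_antisymm
  · simp only [max_le_iff, le_min_iff]
    refine ⟨⟨?_, ?_, ?_, ?_, ?_, ?_⟩, ⟨?_, ?_, ?_, ?_, ?_, ?_⟩, ?_, ?_, ?_, ?_, ?_, ?_⟩ <;> omega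
  · simp only [le_max_iff, le_min_iff, min_le_iff, max_le_iff]
    omega
end

section
/- Let M1, M2, N1, N2 be positive integers, regarded as real numbers. Then min{ M1+M2, N1+N2, (max(M1,N1)+max(M1,N2)+M2)/2, (max(M2,N1)+max(M2,N2)+M1)/2, (max(M1,N1)+max(M2,N1)+N2)/2, (max(M1,N2)+max(M2,N2)+N1)/2, (max(M1,N1)+max(M1,N2)+max(M2,N1)+max(M2,N2))/3 } ≤ (4/3) · min( M1+M2, N1+N2, max(M1, M2, N1, N2) ). -/
theorem stmt_3 (M1 M2 N1 N2 : ℕ) (hM1 : 0 < M1) (hM2 : 0 < M2)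
    (hN1 : 0 < N1) (hN2 : 0 < N2) :
    min ((M1 : ℝ) + M2)
      (min ((N1 : ℝ) + N2)
        (min ((max (M1 : ℝ) N1 + max (M1 : ℝ) N2 + M2) / 2)
          (min ((max (M2 : ℝ) N1 + max (M2 : ℝ) N2 + M1) / 2)
            (min ((max (M1 : ℝ) N1 + max (M2 : ℝ) N1 + N2) / 2)
              (min ((max (M1 : ℝ) N2 + max (M2 : ℝ) N2 + N1) / 2)
                ((max (M1 : ℝ) N1 + max (M1 : ℝ) N2 + max (M2 : ℝ) N1 +
                    max (M2 : ℝ) N2) / 3)))))) ≤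
    (4 / 3 : ℝ) *
      min ((M1 : ℝ) + M2)
        (min ((N1 : ℝ) + N2) (max (M1 : ℝ) (max (M2 : ℝ) (max (N1 : ℝ) N2)))) := by
  have h1 : (0 : ℝ) < M1 := by exact_mod_cast hM1
  have h2 : (0 : ℝ) < M2 := by exact_mod_cast hM2
  have h3 : (0 : ℝ) < N1 := by exact_mod_cast hN1
  have h4 : (0 : ℝ) < N2 := by exact_mod_cast hN2
  generalize (M1 : ℝ) = a at *
  generalize (M2 : ℝ) = b at *
  generalize (N1 : ℝ) = c at *
  generalize (N2 : ℝ) = d at *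
  rw [mul_min_of_nonneg _ _ (by norm_num), mul_min_of_nonneg _ _ (by norm_num)]
  refine le_min ?_ (le_min ?_ ?_)
  · exact (min_le_left _ _).trans (by linarith)
  · exact ((min_le_right _ _).trans (min_le_left _ _)).trans (by linarith)
  · refine ((min_le_right _ _).trans <| (min_le_right _ _).trans <| (min_le_right _ _).trans <|
      (min_le_right _ _).trans <| (min_le_right _ _).trans (min_le_right _ _)).trans ?_
    have ha : a ≤ max a (max b (max c d)) := by simp
    have hb : b ≤ max a (max b (max c d)) := by simp
    have hc : c ≤ max a (max b (max c d)) := by simp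
    have hd : d ≤ max a (max b (max c d)) := by simp
    have := max_le ha hc
    have := max_le ha hd
    have := max_le hb hc
    have := max_le hb hd
    linarith
end

section
/- Let M1, M2, N1, N2 be positive integers and let d11, d12, d21, d22 be nonnegative integers such that (d11,d12,d21,d22), viewed as a quadruple of reals, lies in D_out(M1,M2,N1,N2). Writing x⁺ = max(x,0) for integers x, let r1 = (M1−N1)⁺, r2 = (M2−N1)⁺ and r = (M1+M2−N1)⁺ − r1 − r2. Then N1 ≥ d11 + d12 + (d21 − r1)⁺ + (d22 − r2)⁺ − min( (d21 − r1)⁺, (d22 − r2)⁺, r ). -/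
theorem stmt_5 (M1 M2 N1 N2 : ℤ) (hM1 : 0 < M1) (hM2 : 0 < M2)
    (hN1 : 0 < N1) (hN2 : 0 < N2)
    (d11 d12 d21 d22 : ℤ) (h11 : 0 ≤ d11) (h12 : 0 ≤ d12) (h21 : 0 ≤ d21)
    (h22 : 0 ≤ d22)
    (hD : Dout (M1 : ℝ) (M2 : ℝ) (N1 : ℝ) (N2 : ℝ)
      (d11 : ℝ) (d12 : ℝ) (d21 : ℝ) (d22 : ℝ)) :
    N1 ≥ d11 + d12 + max (d21 - max (M1 - N1) 0) 0 + max (d22 - max (M2 - N1) 0) 0 -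
      min (max (d21 - max (M1 - N1) 0) 0)
        (min (max (d22 - max (M2 - N1) 0) 0)
          (max (M1 + M2 - N1) 0 - max (M1 - N1) 0 - max (M2 - N1) 0)) := by
  obtain ⟨-, -, -, -, a, b, -, -, c, -, e, f⟩ := hD
  have a' : d11 + d12 + d21 ≤ max N1 M1 := by exact_mod_cast a
  have b' : d11 + d12 + d22 ≤ max N1 M2 := by exact_mod_cast b
  have c' : d11 + d12 ≤ N1 := by exact_mod_cast c
  have e' : d11 + d21 ≤ M1 := by exact_mod_cast e
  have f' : d12 + d22 ≤ M2 := by exact_mod_cast f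
  clear a b c e f
  omega
end

section
/- Let n be a positive integer, let α be a type, and let f : Fin (3n) → α be a function such that every value is attained at most 2n times, i.e., for every a : α the cardinality of {i : Fin (3n) | f i = a} is at most 2n. Then there exists a permutation σ of Fin (3n) such that for every k < n, f(σ(3k)) ≠ f(σ(3k+1)) and f(σ(3k)) ≠ f(σ(3k+2)). -/
theorem stmt6_core (n : ℕ) {α : Type*} (f : Fin (3 * n) → α)
    (g : Equiv.Perm (Fin (3 * n)))
    (hg : ∀ k : ℕ, ∀ hk : k < n,
      (f (g ⟨k, by omega⟩) ≠ f (g ⟨k + n, by omega⟩) ∧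
        f (g ⟨k, by omega⟩) ≠ f (g ⟨k + 2 * n, by omega⟩)) ∨
      (f (g ⟨k + 2 * n, by omega⟩) ≠ f (g ⟨k, by omega⟩) ∧
        f (g ⟨k + 2 * n, by omega⟩) ≠ f (g ⟨k + n, by omega⟩))) :
    ∃ σ : Equiv.Perm (Fin (3 * n)), ∀ k : ℕ, k < n → ∀ x y z : Fin (3 * n),
      x.1 = 3 * k → y.1 = 3 * k + 1 → z.1 = 3 * k + 2 →
      f (σ x) ≠ f (σ y) ∧ f (σ x) ≠ f (σ z) := by
  classical
  let Q : ℕ → Prop := fun k => ∃ hk : k < n,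
      (f (g ⟨k, by omega⟩) ≠ f (g ⟨k + n, by omega⟩) ∧
        f (g ⟨k, by omega⟩) ≠ f (g ⟨k + 2 * n, by omega⟩))
  let c : ℕ → ℕ := fun k => if Q k then 0 else 2
  let q : ℕ → ℕ := fun r => if r = 0 then 0 else if r = 1 then n else 2 * n
  have hq : ∀ r, q r ≤ 2 * n := by intro r; simp only [q]; split_ifs <;> omega
  let p : Fin (3 * n) → Fin (3 * n) := fun x =>
    ⟨x.1 / 3 + q ((x.1 % 3 + c (x.1 / 3)) % 3), by
      have := hq ((x.1 % 3 + c (x.1 / 3)) % 3); omega⟩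
  have hp : Function.Injective p := by
    rintro ⟨x, hx⟩ ⟨y, hy⟩ h
    simp only [p, Fin.mk.injEq] at h ⊢
    have key : ∀ a b r s : ℕ, a < n → b < n → r < 3 → s < 3 → a + q r = b + q s →
        a = b ∧ r = s := by
      intro a b r s ha hb hr hs
      simp only [q]
      split_ifs <;> omega
    obtain ⟨h1, h2⟩ := key _ _ _ _ (by omega) (by omega) (by omega) (by omega) h
    rw [h1] at h2
    omega
  refine ⟨(Equiv.ofBijective p (Finite.injective_iff_bijective.mp hp)).trans g, ?_⟩
  rintro k hk ⟨x, hx⟩ ⟨y, hy⟩ ⟨z, hz⟩ rfl rfl rfl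
  have e0 : (3 * k) / 3 = k := by omega
  have e1 : (3 * k + 1) / 3 = k := by omega
  have e2 : (3 * k + 2) / 3 = k := by omega
  have m0 : (3 * k) % 3 = 0 := by omega
  have m1 : (3 * k + 1) % 3 = 1 := by omega
  have m2 : (3 * k + 2) % 3 = 2 := by omega
  simp only [Equiv.trans_apply, Equiv.ofBijective_apply, p, e0, e1, e2, m0, m1, m2]
  by_cases hQ : Q k
  · obtain ⟨_, h1, h2⟩ := id hQ
    simpa [c, hQ, q] using ⟨h1, h2⟩
  · have h := (hg k hk).resolve_left (fun h => hQ ⟨hk, h⟩)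
    simpa [c, hQ, q] using h

theorem stmt_6 (n : ℕ) (hn : 0 < n) {α : Type*} (f : Fin (3 * n) → α)
    (hf : ∀ a : α, Nat.card {i : Fin (3 * n) // f i = a} ≤ 2 * n) :
    ∃ σ : Equiv.Perm (Fin (3 * n)), ∀ k : ℕ, ∀ hk : k < n,
      f (σ ⟨3 * k, by omega⟩) ≠ f (σ ⟨3 * k + 1, by omega⟩) ∧
      f (σ ⟨3 * k, by omega⟩) ≠ f (σ ⟨3 * k + 2, by omega⟩) := by
  classical
  suffices hs : ∃ σ : Equiv.Perm (Fin (3 * n)), ∀ k : ℕ, k < n → ∀ x y z : Fin (3 * n),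
      x.1 = 3 * k → y.1 = 3 * k + 1 → z.1 = 3 * k + 2 →
      f (σ x) ≠ f (σ y) ∧ f (σ x) ≠ f (σ z) by
    obtain ⟨σ, hσ⟩ := hs
    exact ⟨σ, fun k hk => hσ k hk _ _ _ rfl rfl rfl⟩
  have hcard : ∀ (g : Equiv.Perm (Fin (3 * n))) (a : α),
      Nat.card {i : Fin (3 * n) // f i = a} =
        (Finset.univ.filter (fun i => f (g i) = a)).card := by
    intro g a
    rw [← Fintype.card_subtype, ← Nat.card_eq_fintype_card]
    exact (Nat.card_congr (g.subtypeEquiv (fun _ => Iff.rfl))).symm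
  by_cases hl : ∀ a : α, Nat.card {i : Fin (3 * n) // f i = a} ≤ n
  · letI : LinearOrder α := linearOrderOfSTO WellOrderingRel
    have hmono : Monotone (f ∘ Tuple.sort f) := Tuple.monotone_sort f
    have hne : ∀ i j : Fin (3 * n), i.1 + n ≤ j.1 →
        f (Tuple.sort f i) ≠ f (Tuple.sort f j) := by
      intro i j hij he
      have h1 := hl (f (Tuple.sort f i))
      rw [hcard (Tuple.sort f)] at h1
      have h2 : Finset.Icc i j ⊆
          Finset.univ.filter (fun x => f (Tuple.sort f x) = f (Tuple.sort f i)) := by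
        intro x hx
        rw [Finset.mem_Icc] at hx
        simp only [Finset.mem_filter, Finset.mem_univ, true_and]
        exact le_antisymm ((hmono hx.2).trans he.ge) (hmono hx.1)
      have h3 := Finset.card_le_card h2
      have h4 : (Finset.univ.filter
          (fun x => f (Tuple.sort f x) = f (Tuple.sort f i))).card ≤ n := by
        convert h1
      have h3 := h3.trans h4
      rw [Fin.card_Icc] at h3
      omega
    refine stmt6_core n f (Tuple.sort f) fun k hk => Or.inl ⟨hne _ _ ?_, hne _ _ ?_⟩
    · simp
    · simp only; omega
  · push Not at hl
    obtain ⟨a, ha⟩ := hl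
    let h : Fin (3 * n) → ℕ := fun i => if f i = a then 0 else 1
    have hmono : Monotone (h ∘ Tuple.sort h) := Tuple.monotone_sort h
    set g := Tuple.sort h with hgdef
    have hdown : ∀ i j : Fin (3 * n), i ≤ j → f (g j) = a → f (g i) = a := by
      intro i j hij hj
      have := hmono hij
      by_contra hi
      simp [h, hi, hj] at this
    have hfa := hf a
    rw [hcard g] at ha hfa
    have hlow : ∀ i : Fin (3 * n), i.1 ≤ n → f (g i) = a := by
      intro i hi
      by_contra hc
      have h2 : Finset.univ.filter (fun x => f (g x) = a) ⊆ Finset.Iio i := by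
        intro x hx
        simp only [Finset.mem_filter, Finset.mem_univ, true_and] at hx
        rw [Finset.mem_Iio]
        by_contra hx2
        exact hc (hdown _ _ (not_lt.mp hx2) hx)
      have h3 := Finset.card_le_card h2
      rw [Fin.card_Iio] at h3
      omega
    have hhigh : ∀ i : Fin (3 * n), 2 * n ≤ i.1 → f (g i) ≠ a := by
      intro i hi hc
      have h2 : Finset.Iic i ⊆ Finset.univ.filter (fun x => f (g x) = a) := by
        intro x hx
        rw [Finset.mem_Iic] at hx
        simp only [Finset.mem_filter, Finset.mem_univ, true_and]
        exact hdown _ _ hx hc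
      have h3 := Finset.card_le_card h2
      rw [Fin.card_Iic] at h3
      omega
    refine stmt6_core n f g fun k hk => ?_
    have l := hlow ⟨k, by omega⟩ (by simp only; omega)
    have u := hhigh ⟨k + 2 * n, by omega⟩ (by simp only; omega)
    by_cases hm : f (g ⟨k + n, by omega⟩) = a
    · right
      rw [l, hm]
      exact ⟨u, u⟩
    · left
      rw [l]
      exact ⟨Ne.symm hm, Ne.symm u⟩
end

section
/- Let M be a positive integer and let λ : Fin M → Fin 3 → ℂ. Define complex matrices A and B, each with rows indexed by Fin M × Fin 3 and columns indexed by Fin 3 × Fin M, as follows. A has entries: A[(i,r),(0,j)] = 1 if i = j and r ≠ 2, else 0; A[(i,r),(1,j)] = λ i r if i = j and r ≠ 2, else 0; A[(i,r),(2,j)] = 1 if i = j and r ≠ 1, else 0. B has entries: B[(i,r),(0,j)] = 1 if i = j and r ≠ 1, else 0; B[(i,r),(1,j)] = (λ i r)⁻¹ if i = j and r ≠ 1, else 0; B[(i,r),(2,j)] = 1 if i = j and r ≠ 2, else 0. If for every i one has λ i 0 ≠ λ i 1, then A is invertible; and if in addition λ i r ≠ 0 for all i, r and λ i 0 ≠ λ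 i 2 for every i, then B is invertible. -/
theorem block_inv (M : ℕ) (C : Matrix (Fin M × Fin 3) (Fin 3 × Fin M) ℂ)
    (N : Fin M → Matrix (Fin 3) (Fin 3) ℂ)
    (hC : ∀ i r b j, C (i, r) (b, j) = if i = j then N i r b else 0)
    (hN : ∀ i, (N i).det ≠ 0) :
    ∃ C' : Matrix (Fin 3 × Fin M) (Fin M × Fin 3) ℂ, C * C' = 1 ∧ C' * C = 1 := by
  refine ⟨Matrix.of fun p q => if p.2 = q.1 then (N q.1)⁻¹ p.1 q.2 else 0, ?_, ?_⟩
  · ext ⟨i, r⟩ ⟨j, s⟩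
    have h := congrFun (congrFun (Matrix.mul_nonsing_inv (N j) (isUnit_iff_ne_zero.2 (hN j))) r) s
    rw [Matrix.mul_apply] at h
    rw [Matrix.mul_apply, Fintype.sum_prod_type]
    simp only [hC, Matrix.of_apply, mul_ite, mul_zero, Finset.sum_ite_eq', Finset.mem_univ, if_true]
    by_cases hij : i = j
    · subst hij
      simp [h, Matrix.one_apply]
    · simp [hij, Matrix.one_apply]
  · ext ⟨b, i⟩ ⟨c, j⟩
    have h := congrFun (congrFun (Matrix.nonsing_inv_mul (N i) (isUnit_iff_ne_zero.2 (hN i))) b) c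
    rw [Matrix.mul_apply] at h
    rw [Matrix.mul_apply, Fintype.sum_prod_type, Finset.sum_comm]
    simp only [hC, Matrix.of_apply, ite_mul, zero_mul, Finset.sum_ite_eq, Finset.mem_univ, if_true]
    by_cases hij : i = j
    · subst hij
      simp [h, Matrix.one_apply]
    · simp [hij, Matrix.one_apply]

theorem stmt_7 (M : ℕ) (hM : 0 < M) (lam : Fin M → Fin 3 → ℂ)
    (A B : Matrix (Fin M × Fin 3) (Fin 3 × Fin M) ℂ)
    (hA : ∀ (i : Fin M) (r : Fin 3) (b : Fin 3) (j : Fin M),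
      A (i, r) (b, j) =
        if b = 0 then (if i = j ∧ r ≠ 2 then 1 else 0)
        else if b = 1 then (if i = j ∧ r ≠ 2 then lam i r else 0)
        else (if i = j ∧ r ≠ 1 then 1 else 0))
    (hB : ∀ (i : Fin M) (r : Fin 3) (b : Fin 3) (j : Fin M),
      B (i, r) (b, j) =
        if b = 0 then (if i = j ∧ r ≠ 1 then 1 else 0)
        else if b = 1 then (if i = j ∧ r ≠ 1 then (lam i r)⁻¹ else 0)
        else (if i = j ∧ r ≠ 2 then 1 else 0)) :
    ((∀ i, lam i 0 ≠ lam i 1) →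
      ∃ A' : Matrix (Fin 3 × Fin M) (Fin M × Fin 3) ℂ, A * A' = 1 ∧ A' * A = 1) ∧
    ((∀ i, lam i 0 ≠ lam i 1) → (∀ i r, lam i r ≠ 0) → (∀ i, lam i 0 ≠ lam i 2) →
      ∃ B' : Matrix (Fin 3 × Fin M) (Fin M × Fin 3) ℂ, B * B' = 1 ∧ B' * B = 1) := by
  constructor
  · intro h
    refine block_inv M A (fun i => !![1, lam i 0, 1; 1, lam i 1, 0; 0, 0, 1]) ?_ ?_
    · intro i r b j
      rw [hA]
      by_cases hij : i = j <;> fin_cases r <;> fin_cases b <;> simp [hij]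
    · intro i h0
      rw [Matrix.det_fin_three] at h0
      simp at h0
      apply h i
      linear_combination -h0
  · intro _ hz h
    refine block_inv M B
      (fun i => !![1, (lam i 0)⁻¹, 1; 0, 0, 1; 1, (lam i 2)⁻¹, 0]) ?_ ?_
    · intro i r b j
      rw [hB]
      by_cases hij : i = j <;> fin_cases r <;> fin_cases b <;> simp [hij]
    · intro i h0
      rw [Matrix.det_fin_three] at h0
      simp at h0
      apply h i
      apply inv_injective
      linear_combination h0
end

section
/- Let M be a positive integer and let F be an M×M complex matrix such that F = E * diagonal(μ) * E⁻¹ for some invertible M×M complex matrix E and some μ : Fin M → ℂ with μ i ≠ 0 for all i and such that for every c : ℂ, 3 · card{ i : Fin M | μ i = c } ≤ 2M. Let F̄ denote the 3M×3M block-diagonal matrix (rows and columns indexed by Fin 3 × Fin M) with F in each of the three diagonal blocks: F̄[(r,i),(s,j)] = F i j if r = s, else 0. Then F̄ is invertible, and there exist matrices V11 and V21 of size (Fin 3 × Fin M) × (Fin M) over ℂ such that both of the following 3M×3M matrices are invertible: (a) the matrix whose three column blocks are V11, F̄ * V11, and V21; (b) the matrix whose three column blocks are V21, F̄⁻¹ *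 V21, and V11. -/
open Matrix in
lemma aux_unit {M : ℕ} (U G : Matrix (Fin 3 × Fin M) (Fin 3 × Fin M) ℂ)
    (d : Fin 3 × Fin M → ℂ) (hU : IsUnit U) (hG : G = U * Matrix.diagonal d * U⁻¹)
    (e : Fin 3 × Fin M ≃ Fin 3 × Fin M) (v w : Fin 3 → Fin M → ℂ)
    (h : ∀ k a b c, (∀ l, v l k * a + d (e (l, k)) * v l k * b + w l k * c = 0) →
      a = 0 ∧ b = 0 ∧ c = 0) 
    (V W : Matrix (Fin 3 × Fin M) (Fin M) ℂ)
    (hV : V = U * Matrix.of (fun p j => if (e.symm p).2 = j then v (e.symm p).1 j else 0))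
    (hW : W = U * Matrix.of (fun p j => if (e.symm p).2 = j then w (e.symm p).1 j else 0)) :
    IsUnit (Matrix.of fun (p q : Fin 3 × Fin M) =>
        if q.1 = 0 then V p q.2
        else if q.1 = 1 then (G * V) p q.2
        else W p q.2) := by
  set V' : Matrix (Fin 3 × Fin M) (Fin M) ℂ :=
    Matrix.of (fun p j => if (e.symm p).2 = j then v (e.symm p).1 j else 0) with hV'
  set W' : Matrix (Fin 3 × Fin M) (Fin M) ℂ :=
    Matrix.of (fun p j => if (e.symm p).2 = j then w (e.symm p).1 j else 0) with hW'
  have hUd : IsUnit U.det := (Matrix.isUnit_iff_isUnit_det U).1 hU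
  have hGV : G * V = U * (Matrix.diagonal d * V') := by
    rw [hG, hV, Matrix.mul_assoc, Matrix.nonsing_inv_mul_cancel_left _ _ hUd, Matrix.mul_assoc]
  have hB : (Matrix.of fun (p q : Fin 3 × Fin M) =>
        if q.1 = 0 then V p q.2
        else if q.1 = 1 then (G * V) p q.2
        else W p q.2) = U * (Matrix.of fun (p q : Fin 3 × Fin M) =>
        if q.1 = 0 then V' p q.2
        else if q.1 = 1 then (Matrix.diagonal d * V') p q.2
        else W' p q.2) := by
    rw [hGV, hV, hW]
    ext p ⟨l, j⟩
    fin_cases l <;> simp [Matrix.mul_apply]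
  rw [hB]
  refine hU.mul ?_
  rw [← Matrix.mulVec_injective_iff_isUnit]
  refine (injective_iff_map_eq_zero (Matrix.mulVecLin _)).2 ?_
  intro x hx
  rw [Matrix.mulVecLin_apply] at hx
  have key : ∀ k, x (0, k) = 0 ∧ x (1, k) = 0 ∧ x (2, k) = 0 := by
    intro k
    apply h k
    intro l
    have := congrFun hx (e (l, k))
    simp only [Matrix.mulVec, dotProduct, Fintype.sum_prod_type, Fin.sum_univ_three] at this
    simpa [Matrix.diagonal_mul, hV', hW'] using this
  ext ⟨l, k⟩
  obtain ⟨h0, h1, h2⟩ := key k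
  fin_cases l
  · exact h0
  · exact h1
  · exact h2

lemma aux_comb {M : ℕ} (μ : Fin M → ℂ)
    (hmult : ∀ c : ℂ, 3 * Nat.card {i : Fin M // μ i = c} ≤ 2 * M) :
    ∃ e : Fin 3 × Fin M ≃ Fin 3 × Fin M, ∀ k, μ (e (0, k)).2 ≠ μ (e (2, k)).2 := by
  let key : ℂ → Lex (ℝ × ℝ) := fun z => toLex (z.re, z.im)
  have hkey : Function.Injective key := by
    intro a b hab
    have h := toLex.injective hab
    simp only [Prod.mk.injEq] at h
    exact Complex.ext h.1 h.2
  let f : Fin (3 * M) → Lex (ℝ × ℝ) := fun t => key (μ (finProdFinEquiv.symm t).2)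
  have hmono : Monotone (f ∘ Tuple.sort f) := Tuple.monotone_sort f
  refine ⟨(finProdFinEquiv.trans (Tuple.sort f)).trans finProdFinEquiv.symm, ?_⟩
  intro k hk
  set c := μ (finProdFinEquiv.symm (Tuple.sort f (finProdFinEquiv (0, k)))).2 with hc
  have hall : ∀ t : Fin (3 * M), finProdFinEquiv ((0 : Fin 3), k) ≤ t →
      t ≤ finProdFinEquiv ((2 : Fin 3), k) →
      μ (finProdFinEquiv.symm (Tuple.sort f t)).2 = c := by
    intro t h1 h2
    apply hkey
    apply le_antisymm
    · have := hmono h2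
      refine this.trans (le_of_eq ?_)
      exact congrArg key hk.symm
    · exact hmono h1
  have hlt : ∀ s : Fin (2 * M + 1), k.1 + s.1 < 3 * M := fun s => by omega
  let g : Fin (2 * M + 1) → Fin 3 × {i : Fin M // μ i = c} := fun s =>
    ⟨(finProdFinEquiv.symm (Tuple.sort f ⟨k.1 + s.1, hlt s⟩)).1,
     (finProdFinEquiv.symm (Tuple.sort f ⟨k.1 + s.1, hlt s⟩)).2, by
      apply hall
      · rw [Fin.le_def]; simp
      · rw [Fin.le_def]; simp; omega⟩
  have hg : Function.Injective g := by
    intro s t hst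
    simp only [g, Prod.mk.injEq, Subtype.mk.injEq] at hst
    have := finProdFinEquiv.symm.injective (Prod.ext hst.1 hst.2)
    have := (Tuple.sort f).injective this
    simp only [Fin.mk.injEq] at this
    apply Fin.ext; omega
  have h1 := Nat.card_le_card_of_injective g hg
  rw [Nat.card_prod] at h1
  simp only [Nat.card_fin] at h1
  have := hmult c
  omega

theorem stmt_8 (M : ℕ) (hM : 0 < M) (F E : Matrix (Fin M) (Fin M) ℂ)
    (μ : Fin M → ℂ) (hE : IsUnit E) (hF : F = E * Matrix.diagonal μ * E⁻¹)
    (hμ0 : ∀ i, μ i ≠ 0)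
    (hmult : ∀ c : ℂ, 3 * Nat.card {i : Fin M // μ i = c} ≤ 2 * M)
    (Fbar : Matrix (Fin 3 × Fin M) (Fin 3 × Fin M) ℂ)
    (hFbar : ∀ (r s : Fin 3) (i j : Fin M),
      Fbar (r, i) (s, j) = if r = s then F i j else 0) :
    IsUnit Fbar ∧
    ∃ V11 V21 : Matrix (Fin 3 × Fin M) (Fin M) ℂ,
      IsUnit (Matrix.of fun (p q : Fin 3 × Fin M) =>
        if q.1 = 0 then V11 p q.2
        else if q.1 = 1 then (Fbar * V11) p q.2
        else V21 p q.2) ∧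
      IsUnit (Matrix.of fun (p q : Fin 3 × Fin M) =>
        if q.1 = 0 then V21 p q.2
        else if q.1 = 1 then (Fbar⁻¹ * V21) p q.2
        else V11 p q.2) := by
  classical
  have hEd : IsUnit E.det := (Matrix.isUnit_iff_isUnit_det E).1 hE
  let U : Matrix (Fin 3 × Fin M) (Fin 3 × Fin M) ℂ :=
    Matrix.kroneckerMap (· * ·) (1 : Matrix (Fin 3) (Fin 3) ℂ) E
  let U' : Matrix (Fin 3 × Fin M) (Fin 3 × Fin M) ℂ :=
    Matrix.kroneckerMap (· * ·) (1 : Matrix (Fin 3) (Fin 3) ℂ) E⁻¹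
  let d : Fin 3 × Fin M → ℂ := fun p => μ p.2
  have hUU' : U * U' = 1 := by
    simp only [U, U']
    rw [← Matrix.mul_kronecker_mul, Matrix.mul_nonsing_inv _ hEd, one_mul, Matrix.one_kronecker_one]
  have hUinv : U⁻¹ = U' := Matrix.inv_eq_right_inv hUU'
  have hUd : IsUnit U.det := Matrix.isUnit_det_of_right_inverse hUU'
  have hU : IsUnit U := (Matrix.isUnit_iff_isUnit_det U).2 hUd
  have hD : Matrix.diagonal d =
      Matrix.kroneckerMap (· * ·) (1 : Matrix (Fin 3) (Fin 3) ℂ) (Matrix.diagonal μ) := by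
    rw [← Matrix.diagonal_one, Matrix.diagonal_kronecker_diagonal]
    simp [d]
  have hG : Fbar = U * Matrix.diagonal d * U⁻¹ := by
    rw [hUinv, hD]
    simp only [U, U']
    rw [← Matrix.mul_kronecker_mul, ← Matrix.mul_kronecker_mul, ← hF, one_mul, one_mul]
    ext ⟨r, i⟩ ⟨s, j⟩
    rw [hFbar, Matrix.kroneckerMap_apply, Matrix.one_apply]
    simp
  have hd0 : ∀ p, d p ≠ 0 := fun p => hμ0 p.2
  have hdd : Matrix.diagonal d * Matrix.diagonal (fun p => (d p)⁻¹) = 1 := by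
    rw [Matrix.diagonal_mul_diagonal, ← Matrix.diagonal_one]
    congr 1
    ext p
    exact mul_inv_cancel₀ (hd0 p)
  have hGG : Fbar * (U * Matrix.diagonal (fun p => (d p)⁻¹) * U⁻¹) = 1 := by
    rw [hG]
    calc U * Matrix.diagonal d * U⁻¹ * (U * Matrix.diagonal (fun p => (d p)⁻¹) * U⁻¹)
        = U * Matrix.diagonal d * (U⁻¹ * U) * Matrix.diagonal (fun p => (d p)⁻¹) * U⁻¹ := by
          simp only [Matrix.mul_assoc]
      _ = U * (Matrix.diagonal d * Matrix.diagonal (fun p => (d p)⁻¹)) * U⁻¹ := by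
          rw [Matrix.nonsing_inv_mul _ hUd, Matrix.mul_one, Matrix.mul_assoc U]
      _ = 1 := by rw [hdd, Matrix.mul_one, Matrix.mul_nonsing_inv _ hUd]
  have hGinv : Fbar⁻¹ = U * Matrix.diagonal (fun p => (d p)⁻¹) * U⁻¹ :=
    Matrix.inv_eq_right_inv hGG
  obtain ⟨e, he⟩ := aux_comb μ hmult
  refine ⟨(Matrix.isUnit_iff_isUnit_det _).2 (Matrix.isUnit_det_of_right_inverse hGG), ?_⟩
  let v : Fin 3 → Fin M → ℂ := fun l _ => ![1, 0, 1] l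
  let w : Fin 3 → Fin M → ℂ := fun l k =>
    if d (e (1, k)) = d (e (0, k)) then ![0, 1, 1] l else ![1, 1, 0] l
  refine ⟨_, _, aux_unit U Fbar d hU hG e v w ?_ _ _ rfl rfl,
    aux_unit U Fbar⁻¹ (fun p => (d p)⁻¹) hU hGinv e w v ?_ _ _ rfl rfl⟩
  · intro k a b c h
    have h0 := h 0
    have h1 := h 1
    have h2 := h 2
    have hne : d (e (0, k)) - d (e (2, k)) ≠ 0 := sub_ne_zero.2 (he k)
    have hc : c = 0 := by
      by_cases hz : d (e (1, k)) = d (e (0, k)) <;> simpa [v, w, hz] using h1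
    subst hc
    simp [v] at h0 h2
    have hb : b = 0 := by
      have : (d (e (0, k)) - d (e (2, k))) * b = 0 := by linear_combination h0 - h2
      exact (mul_eq_zero.1 this).resolve_left hne
    subst hb
    simpa using h0
  · intro k a b c h
    have h0 := h 0
    have h1 := h 1
    have h2 := h 2
    have hne : d (e (0, k)) ≠ d (e (2, k)) := he k
    by_cases hz : d (e (1, k)) = d (e (0, k))
    · simp [v, w, hz] at h0 h1 h2
      subst h0
      have hne' : (d (e (0, k)))⁻¹ - (d (e (2, k)))⁻¹ ≠ 0 :=
        sub_ne_zero.2 (fun h => hne (inv_injective h))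
      have hb : b = 0 := by
        have : ((d (e (0, k)))⁻¹ - (d (e (2, k)))⁻¹) * b = 0 := by linear_combination h1 - h2
        exact (mul_eq_zero.1 this).resolve_left hne'
      subst hb
      simpa using h1
    · simp [v, w, hz] at h0 h1 h2
      subst h2
      have hne' : (d (e (1, k)))⁻¹ - (d (e (0, k)))⁻¹ ≠ 0 :=
        sub_ne_zero.2 (fun h => hz (inv_injective h))
      have hb : b = 0 := by
        have : ((d (e (1, k)))⁻¹ - (d (e (0, k)))⁻¹) * b = 0 := by linear_combination h1 - h0
        exact (mul_eq_zero.1 this).resolve_left hne'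
      subst hb
      simpa using h1
end

section
/- Let M be an integer with M > 1 and let λ : Fin M → ℂ be injective with λ i ≠ 0 for all i. Define a complex matrix A with rows indexed by Fin 2 × Fin M and columns indexed by Fin 2 × Fin M as follows: A[(0,i),(0,j)] = 1 if i = j, else 0; A[(1,i),(0,j)] = 1 if i = j + 1 (addition in Fin M, i.e., cyclically), else 0; A[(0,i),(1,j)] = (λ i)⁻¹ if i = j, else 0; A[(1,i),(1,j)] = (λ i)⁻¹ if i = j + 1 (cyclically), else 0. Then A is invertible. -/
theorem stmt_9 (M : ℕ) [NeZero M] (hM : 1 < M) (lam : Fin M → ℂ)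
    (hinj : Function.Injective lam) (hne : ∀ i, lam i ≠ 0)
    (A : Matrix (Fin 2 × Fin M) (Fin 2 × Fin M) ℂ)
    (hA : ∀ (a b : Fin 2) (i j : Fin M),
      A (a, i) (b, j) =
        if b = 0 then
          (if a = 0 then (if i = j then 1 else 0)
           else (if i = j + 1 then 1 else 0))
        else
          (if a = 0 then (if i = j then (lam i)⁻¹ else 0)
           else (if i = j + 1 then (lam i)⁻¹ else 0))) :
    IsUnit A := by
  have hne1 : ∀ j : Fin M, j + 1 ≠ j := by
    intro j h
    have h1 : (1 : Fin M) = 0 := by simpa using h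
    have h2 := congrArg Fin.val h1
    rw [Fin.val_one', Fin.val_zero, Nat.mod_eq_of_lt hM] at h2
    omega
  rw [← Matrix.mulVec_injective_iff_isUnit]
  refine (injective_iff_map_eq_zero (Matrix.mulVecLin A)).mpr ?_
  intro v hv
  have hv' : ∀ p, ∑ q, A p q * v q = 0 := fun p => congrFun hv p
  have e0 : ∀ j, v (0, j) + (lam j)⁻¹ * v (1, j) = 0 := by
    intro j
    have h := hv' (0, j)
    rw [Fintype.sum_prod_type] at h
    simpa [hA] using h
  have e1 : ∀ j, v (0, j) + (lam (j + 1))⁻¹ * v (1, j) = 0 := by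
    intro j
    have h := hv' (1, j + 1)
    rw [Fintype.sum_prod_type] at h
    simpa [hA] using h
  have z1 : ∀ j, v (1, j) = 0 := by
    intro j
    have h : ((lam j)⁻¹ - (lam (j + 1))⁻¹) * v (1, j) = 0 := by
      linear_combination e0 j - e1 j
    rcases mul_eq_zero.mp h with h | h
    · exact absurd (hinj (inv_injective (sub_eq_zero.mp h))).symm (hne1 j)
    · exact h
  funext ⟨a, j⟩
  fin_cases a
  · simpa [z1 j] using e0 j
  · exact z1 j
end

section
/- Let n and m be positive integers, let H be an n×m complex matrix such that Hᴴ·H is invertible (Hᴴ denoting the conjugate transpose), and let α be a nonnegative real number such that the m×m matrix I_m − α·(Hᴴ·H) is positive semidefinite. Define the n×n matrix K' = I_n − H·(Hᴴ·H)⁻¹·Hᴴ + α·(H·Hᴴ). Then both K' and I_n − K' are positive semidefinite. -/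
open Matrix ComplexOrder

theorem stmt_13 (n m : ℕ) (hn : 0 < n) (hm : 0 < m)
    (H : Matrix (Fin n) (Fin m) ℂ) (hHH : IsUnit (Hᴴ * H))
    (α : ℝ) (hα : 0 ≤ α)
    (hαle : ((1 : Matrix (Fin m) (Fin m) ℂ) - (α : ℂ) • (Hᴴ * H)).PosSemidef) :
    ((1 : Matrix (Fin n) (Fin n) ℂ) - H * (Hᴴ * H)⁻¹ * Hᴴ +
        (α : ℂ) • (H * Hᴴ)).PosSemidef ∧
    ((1 : Matrix (Fin n) (Fin n) ℂ) -
        ((1 : Matrix (Fin n) (Fin n) ℂ) - H * (Hᴴ * H)⁻¹ * Hᴴ +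
          (α : ℂ) • (H * Hᴴ))).PosSemidef := by
  have hαC : (0 : ℂ) ≤ (α : ℂ) := by exact_mod_cast hα
  have hdet : IsUnit (Hᴴ * H).det := (Matrix.isUnit_iff_isUnit_det _).1 hHH
  have hGpsd : (Hᴴ * H).PosSemidef := Matrix.posSemidef_conjTranspose_mul_self H
  have hGi : ((Hᴴ * H)⁻¹).PosSemidef := hGpsd.inv
  have h1 : (Hᴴ * H) * (Hᴴ * H)⁻¹ = 1 := Matrix.mul_nonsing_inv _ hdet
  have h2 : (Hᴴ * H)⁻¹ * (Hᴴ * H) = 1 := Matrix.nonsing_inv_mul _ hdet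
  constructor
  · refine Matrix.PosSemidef.add ?_ ((Matrix.posSemidef_self_mul_conjTranspose H).smul hαC)
    have hP : (H * (Hᴴ * H)⁻¹ * Hᴴ)ᴴ = H * (Hᴴ * H)⁻¹ * Hᴴ := by
      rw [Matrix.conjTranspose_mul, Matrix.conjTranspose_mul, hGi.1.eq,
        Matrix.conjTranspose_conjTranspose, Matrix.mul_assoc]
    have hPP : (H * (Hᴴ * H)⁻¹ * Hᴴ) * (H * (Hᴴ * H)⁻¹ * Hᴴ) = H * (Hᴴ * H)⁻¹ * Hᴴ := by
      calc _ = H * ((Hᴴ * H)⁻¹ * (Hᴴ * H)) * (Hᴴ * H)⁻¹ * Hᴴ := by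
            simp only [Matrix.mul_assoc]
        _ = _ := by rw [h2, Matrix.mul_one]
    have := Matrix.posSemidef_conjTranspose_mul_self (1 - H * (Hᴴ * H)⁻¹ * Hᴴ)
    rw [Matrix.conjTranspose_sub, hP, Matrix.conjTranspose_one, Matrix.sub_mul, Matrix.one_mul, Matrix.mul_sub, Matrix.mul_one,
      hPP, sub_self, sub_zero] at this
    exact this
  · have hC := (hGi.conjTranspose_mul_mul_same (1 - (α : ℂ) • (Hᴴ * H))).add (hαle.smul hαC)
    rw [hαle.1.eq] at hC
    have hD := hC.mul_mul_conjTranspose_same H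
    have e : (1 - (α : ℂ) • (Hᴴ * H)) * (Hᴴ * H)⁻¹ * (1 - (α : ℂ) • (Hᴴ * H))
        + (α : ℂ) • (1 - (α : ℂ) • (Hᴴ * H)) = (Hᴴ * H)⁻¹ - (α : ℂ) • 1 := by
      rw [Matrix.sub_mul, Matrix.smul_mul, h1, Matrix.one_mul, Matrix.sub_mul, Matrix.mul_sub, 
        Matrix.mul_smul, h2, Matrix.mul_one, Matrix.smul_mul, Matrix.one_mul, smul_sub]
      abel
    rw [e] at hD
    convert hD using 1
    rw [Matrix.mul_sub, Matrix.sub_mul, Matrix.mul_smul, Matrix.mul_one, Matrix.smul_mul]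
    abel
end
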